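/- arXiv:1906.00135 — 3 statements merged into one kernel-verified Lean document; each statement's English description precedes it below -/
import Mathlib

section
/- Let G be a finite simple graph on n ≥ 1 vertices with maximum degree Δ(G), and let p = (Δ(G)+1)/n. Then the p-influencing set of G is exactly the set of vertices of G whose degree equals Δ(G); that is, a vertex v belongs to some γ_p-set if and only if deg(v) = Δ(G). -/
/-!
A singleton `{v}` has a closed neighborhood of size `deg v + 1`
(`ncard_closedNbhd_singleton`), and for `p = (Δ + 1) / n` a set is `p`-dominating exactly when
its closed neighborhood has at least `Δ + 1` elements (`isPDomSet_iff`). Hence `{v}` is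
`p`-dominating if and only if `v` has degree `Δ`. Such a vertex exists and the empty set dominates
nothing, so `γ_p = 1`, and the `γ_p`-sets are exactly the singletons of vertices of maximum degree.
-/

open SimpleGraph

/-- The closed neighborhood `N[S]` of a set of vertices `S`:
all vertices equal or adjacent to some vertex of `S`. -/
def closedNbhd {V : Type*} (G : SimpleGraph V) (S : Set V) : Set V :=
  {w | ∃ u ∈ S, w = u ∨ G.Adj u w}

/-- `S` is a `p`-dominating set of `G` if `N[S]` contains at least a proportion `p`
of the vertices. -/
def IsPDomSet {V : Type*} [Fintype V] (G : SimpleGraph V) (p : ℝ) (S : Set V) : Prop :=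
  p * (Fintype.card V : ℝ) ≤ ((closedNbhd G S).ncard : ℝ)

/-- The `p`-domination number `γ_p(G)`: the minimum cardinality of a `p`-dominating set. -/
noncomputable def pDomNum {V : Type*} [Fintype V] (G : SimpleGraph V) (p : ℝ) : ℕ :=
  sInf {k : ℕ | ∃ S : Set V, IsPDomSet G p S ∧ S.ncard = k}

/-- `S` is a `γ_p`-set: a `p`-dominating set of minimum cardinality `γ_p(G)`. -/
def IsGammaPSet {V : Type*} [Fintype V] (G : SimpleGraph V) (p : ℝ) (S : Set V) : Prop :=
  IsPDomSet G p S ∧ S.ncard = pDomNum G p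

/-- `v` belongs to the `p`-influencing set of `G`, i.e. the union of all `γ_p`-sets. -/
def InInfluence {V : Type*} [Fintype V] (G : SimpleGraph V) (p : ℝ) (v : V) : Prop :=
  ∃ S : Set V, IsGammaPSet G p S ∧ v ∈ S

theorem ncard_closedNbhd_singleton {V : Type*} [Fintype V] (G : SimpleGraph V) (v : V) :
    (closedNbhd G {v}).ncard = (G.neighborSet v).ncard + 1 := by
  have h : closedNbhd G {v} = insert v (G.neighborSet v) := by
    ext w
    simp [closedNbhd]
  rw [h, Set.ncard_insert_of_notMem (by simp) (Set.toFinite _)]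

theorem isPDomSet_iff {V : Type*} [Fintype V] [Nonempty V] (G : SimpleGraph V) (k : ℕ)
    (S : Set V) :
    IsPDomSet G (((k : ℝ) + 1) / (Fintype.card V : ℝ)) S ↔ k + 1 ≤ (closedNbhd G S).ncard := by
  have hn : (Fintype.card V : ℝ) ≠ 0 := by exact_mod_cast Fintype.card_ne_zero
  unfold IsPDomSet
  rw [div_mul_cancel₀ _ hn]
  exact_mod_cast Iff.rfl

theorem stmt12 {V : Type*} [Fintype V] [Nonempty V] (G : SimpleGraph V)
    (Δ : ℕ)
    (hΔ : Δ = Finset.univ.sup' Finset.univ_nonempty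
        (fun v : V => (G.neighborSet v).ncard)) :
    ∀ v : V, InInfluence G (((Δ : ℝ) + 1) / (Fintype.card V : ℝ)) v ↔
      (G.neighborSet v).ncard = Δ := by
  have hle (v : V) : (G.neighborSet v).ncard ≤ Δ :=
    hΔ ▸ Finset.le_sup' (fun v : V => (G.neighborSet v).ncard) (Finset.mem_univ v)
  obtain ⟨m, -, hm⟩ := Finset.exists_mem_eq_sup' Finset.univ_nonempty
    (fun v : V => (G.neighborSet v).ncard)
  rw [← hΔ] at hm
  have hγ : pDomNum G (((Δ : ℝ) + 1) / (Fintype.card V : ℝ)) = 1 := by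
    apply le_antisymm
    · refine Nat.sInf_le ⟨{m}, ?_, Set.ncard_singleton m⟩
      rw [isPDomSet_iff, ncard_closedNbhd_singleton, hm]
    · refine le_csInf ⟨_, {m}, ?_, rfl⟩ ?_
      · rw [isPDomSet_iff, ncard_closedNbhd_singleton, hm]
      · rintro k ⟨S, hS, rfl⟩
        rw [isPDomSet_iff] at hS
        rcases S.eq_empty_or_nonempty with rfl | hne
        · simp [closedNbhd] at hS
        · exact (Set.ncard_pos (Set.toFinite S)).2 hne
  intro v
  constructor
  · rintro ⟨S, ⟨hS, hc⟩, hv⟩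
    rw [hγ] at hc
    obtain ⟨u, rfl⟩ := Set.ncard_eq_one.1 hc
    obtain rfl : v = u := hv
    rw [isPDomSet_iff, ncard_closedNbhd_singleton] at hS
    exact le_antisymm (hle v) (by omega)
  · intro hv
    refine ⟨{v}, ⟨?_, by rw [hγ, Set.ncard_singleton]⟩, rfl⟩
    rw [isPDomSet_iff, ncard_closedNbhd_singleton, hv]
end

section
/- Let K_{m,n} be the complete bipartite graph with parts V_1 and V_2 of sizes m and n respectively, where m > n ≥ 1. Then the intersection over all real p with 0 < p ≤ 1 of the p-influencing sets of K_{m,n} equals V_2; that is, a vertex belongs to some γ_p-set for every p ∈ (0,1] if and only if it lies in V_2. -/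
/-!
A vertex of `V₂` dominates `m + 1` vertices and a vertex of `V₁` only `n + 1 < m + 1`.
For `v ∈ V₂` and `p ∈ (0, 1]`, either `{v}` is `p`-dominating, hence a `γ_p`-set, or no
singleton is, and then `v` together with any vertex of `V₁` dominates the whole graph and is a
`γ_p`-set of size two. For `p = (m + 1) / (m + n)` the `γ_p`-sets are exactly the singletons of
`V₂`, so no vertex of `V₁` is `p`-influencing for this `p`.
-/

open SimpleGraph

lemma closedNbhd_empty {V : Type*} (G : SimpleGraph V) : closedNbhd G ∅ = ∅ := by
  simp [closedNbhd]

lemma ncard_closedNbhd_inl (m n : ℕ) (i : Fin m) :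
    (closedNbhd (completeBipartiteGraph (Fin m) (Fin n)) {Sum.inl i}).ncard = n + 1 := by
  have h : closedNbhd (completeBipartiteGraph (Fin m) (Fin n)) {Sum.inl i}
      = insert (Sum.inl i) (Set.range Sum.inr) := by
    ext w; cases w <;> simp [closedNbhd]
  rw [h, Set.ncard_insert_of_notMem (by simp), ← Set.image_univ,
    Set.ncard_image_of_injective _ Sum.inr_injective]
  simp

lemma ncard_closedNbhd_inr (m n : ℕ) (j : Fin n) :
    (closedNbhd (completeBipartiteGraph (Fin m) (Fin n)) {Sum.inr j}).ncard = m + 1 := by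
  have h : closedNbhd (completeBipartiteGraph (Fin m) (Fin n)) {Sum.inr j}
      = insert (Sum.inr j) (Set.range Sum.inl) := by
    ext w; cases w <;> simp [closedNbhd]
  rw [h, Set.ncard_insert_of_notMem (by simp), ← Set.image_univ,
    Set.ncard_image_of_injective _ Sum.inl_injective]
  simp

lemma closedNbhd_pair (m n : ℕ) (i : Fin m) (j : Fin n) :
    closedNbhd (completeBipartiteGraph (Fin m) (Fin n)) {Sum.inr j, Sum.inl i}
      = Set.univ := by
  ext w; cases w <;> simp [closedNbhd]

/-- For `p > 0` in a nonempty graph, the empty set is not `p`-dominating. -/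
lemma IsPDomSet.one_le_ncard {V : Type*} [Fintype V] [Nonempty V] {G : SimpleGraph V} {p : ℝ}
    {S : Set V} (hp : 0 < p) (hS : IsPDomSet G p S) : 1 ≤ S.ncard := by
  rw [Nat.one_le_iff_ne_zero]
  intro h
  rw [Set.ncard_eq_zero] at h
  subst h
  have hc : (0 : ℝ) < Fintype.card V := by exact_mod_cast Fintype.card_pos
  have := mul_pos hp hc
  simp only [IsPDomSet, closedNbhd_empty, Set.ncard_empty, Nat.cast_zero] at hS
  linarith

/-- A `p`-dominating set no larger than any other is a `γ_p`-set. -/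
lemma isGammaPSet_of_forall_le {V : Type*} [Fintype V] {G : SimpleGraph V} {p : ℝ}
    {S : Set V} (hS : IsPDomSet G p S) (h : ∀ T, IsPDomSet G p T → S.ncard ≤ T.ncard) :
    IsGammaPSet G p S := by
  refine ⟨hS, le_antisymm (le_csInf ⟨_, S, hS, rfl⟩ ?_) (Nat.sInf_le ⟨S, hS, rfl⟩)⟩
  rintro k ⟨T, hT, rfl⟩
  exact h T hT

theorem stmt15 (m n : ℕ) (hn : 1 ≤ n) (hmn : n < m) :
    ∀ v : Fin m ⊕ Fin n,
      (∀ p : ℝ, 0 < p → p ≤ 1 →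
        InInfluence (completeBipartiteGraph (Fin m) (Fin n)) p v) ↔ v.isRight := by
  have hmn' : (n : ℝ) < m := by exact_mod_cast hmn
  have hn' : (1 : ℝ) ≤ n := by exact_mod_cast hn
  rintro (i | j)
  · simp only [Sum.isRight_inl, Bool.false_eq_true, iff_false]
    intro h
    have hpos : (0 : ℝ) < m + n := by linarith
    obtain ⟨S, ⟨hS, hcard⟩, hi⟩ := h ((m + 1) / (m + n)) (by positivity)
      ((div_le_one hpos).2 (by linarith))
    have hdom : IsPDomSet (completeBipartiteGraph (Fin m) (Fin n)) ((m + 1) / (m + n) : ℝ)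
        {Sum.inr ⟨0, hn⟩} := by
      unfold IsPDomSet
      rw [ncard_closedNbhd_inr]
      simp [div_mul_cancel₀ _ hpos.ne']
    have hle : S.ncard ≤ 1 := by
      rw [hcard]
      exact Nat.sInf_le ⟨_, hdom, Set.ncard_singleton _⟩
    have hS' : S = {Sum.inl i} := by
      ext w
      exact ⟨fun hw => (Set.ncard_le_one (Set.toFinite S)).1 hle w hw _ hi,
        fun hw => by rw [Set.mem_singleton_iff.1 hw]; exact hi⟩
    subst hS'
    unfold IsPDomSet at hS
    rw [ncard_closedNbhd_inl] at hS
    simp [div_mul_cancel₀ _ hpos.ne'] at hS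
    omega
  · simp only [Sum.isRight_inr, iff_true]
    intro p hp hp1
    have : Nonempty (Fin m ⊕ Fin n) := ⟨Sum.inr j⟩
    by_cases hd : IsPDomSet (completeBipartiteGraph (Fin m) (Fin n)) p {Sum.inr j}
    · refine ⟨_, isGammaPSet_of_forall_le hd fun T hT => ?_, Set.mem_singleton _⟩
      rw [Set.ncard_singleton]
      exact hT.one_le_ncard hp
    · have hd' : p * (Fintype.card (Fin m ⊕ Fin n) : ℝ) > m + 1 := by
        unfold IsPDomSet at hd
        rw [ncard_closedNbhd_inr] at hd
        push_cast at hd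
        exact not_le.1 hd
      refine ⟨{Sum.inr j, Sum.inl ⟨0, by omega⟩},
        isGammaPSet_of_forall_le ?_ fun T hT => ?_, by simp⟩
      · unfold IsPDomSet
        rw [closedNbhd_pair, Set.ncard_univ, Nat.card_eq_fintype_card]
        exact mul_le_of_le_one_left (Nat.cast_nonneg _) hp1
      · rw [Set.ncard_pair (by simp)]
        by_contra hlt
        have h1 : T.ncard = 1 := by
          have := hT.one_le_ncard hp
          omega
        obtain ⟨u, rfl⟩ := Set.ncard_eq_one.1 h1
        unfold IsPDomSet at hT
        rcases u with i | k
        · rw [ncard_closedNbhd_inl] at hT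
          push_cast at hT
          linarith
        · rw [ncard_closedNbhd_inr] at hT
          push_cast at hT
          linarith
end

section
/- Let P_n be the path with vertices v_1, …, v_n (v_i adjacent to v_{i+1}), where n ≥ 4 and n ≡ 1 (mod 3). Then: (i) for every integer k ≥ 0 with (3k+1)/n ≤ 1, the p-influencing set of P_n for p = (3k+1)/n and for p = (3k+2)/n (when (3k+2)/n ≤ 1) is the whole vertex set {v_1, …, v_n}; (ii) for every integer k ≥ 1 with 3k ≤ n − 4, the p-influencing set of P_n for p = 3k/n is {v_2, v_3, …, v_{n−1}}; and (iii) for p = (n−1)/n, the p-influencing set of P_n is {v_1, …, v_n} \ {v_1, v_4, v_7, …, v_n} (the vertices v_i with i ≢ 1 (mod 3)). -/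
/-!
Write `n = 3m + 1` and number the vertices `0, …, 3m`. A closed neighbourhood in a path has at most three vertices, so
`|N[S]| ≤ 3|S|` (`ncard_closedNbhd_le`), and covering `t` vertices takes at least `⌈t/3⌉` vertices.
Any `S` attaining this bound is therefore a `γ`-set for the threshold `t` (`inInfluence_of_le`).

Witnesses are arithmetic progressions `a, a+3, …, a+3k`, whose closed neighbourhoods are intervals
of length `3k+3`, truncated at the ends of the path. A progression can be slid inside its residue
class so as to pass through a prescribed vertex (`inInfluence_of_window`). Only for the threshold
`t = n` do the residue classes 1 and 2 need one extra endpoint.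

For the exclusions, a `γ`-set for `t = 3k` has `k` vertices, so it must cover exactly three new
vertices with each of its members. An endpoint covers only two. If `t = 3m` and `S` contains the
vertex `3j` with `j < m`, split `S` at `3j` into `a` vertices on the left and `b` on the right,
`a + b + 1 = m`. The part `[0, 3j+1]` receives at most `min (3a+3) (3j+2)` covered vertices and the part
`[3j+2, 3m]` at most `min (3b) (3(m-j)-1)`; in both cases `a ≥ j` and `a < j` the total is at most
`3m - 1`.
-/

open SimpleGraph

lemma mem_closedNbhd_path {n : ℕ} {S : Set (Fin n)} {w : Fin n} :
    w ∈ closedNbhd (pathGraph n) S ↔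
      ∃ u ∈ S, w.val = u.val ∨ u.val + 1 = w.val ∨ w.val + 1 = u.val := by
  simp only [closedNbhd, Set.mem_ofPred_eq, pathGraph_adj, Fin.ext_iff]

lemma ncard_le_of_val {n : ℕ} (T : Set (Fin n)) (F : Finset ℕ) (h : ∀ x ∈ T, x.val ∈ F) :
    T.ncard ≤ F.card := by
  rw [← Set.ncard_coe_finset F]
  exact Set.ncard_le_ncard_of_injOn Fin.val h Fin.val_injective.injOn (Finset.finite_toSet F)

lemma le_ncard_of_val {n : ℕ} (T : Set (Fin n)) (lo hi : ℕ) (hhi : hi ≤ n)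
    (h : ∀ x : Fin n, lo ≤ x.val → x.val < hi → x ∈ T) : hi - lo ≤ T.ncard := by
  have h1 : (Finset.Ico lo hi : Set ℕ) ⊆ Fin.val '' T := by
    intro x hx
    simp only [Finset.coe_Ico, Set.mem_Ico] at hx
    exact ⟨⟨x, by omega⟩, h _ hx.1 hx.2, rfl⟩
  have h2 := Set.ncard_le_ncard h1 (Set.toFinite _)
  rw [Set.ncard_coe_finset, Nat.card_Ico] at h2
  exact h2.trans (Set.ncard_image_le (Set.toFinite _))

lemma closedNbhd_union {V : Type*} (G : SimpleGraph V) (S T : Set V) :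
    closedNbhd G (S ∪ T) = closedNbhd G S ∪ closedNbhd G T := by
  ext w
  simp only [closedNbhd, Set.mem_ofPred_eq, Set.mem_union, or_and_right, exists_or]

lemma ncard_closedNbhd_singleton_le {n : ℕ} (u : Fin n) :
    (closedNbhd (pathGraph n) {u}).ncard ≤ 3 := by
  refine (ncard_le_of_val _ {u.val - 1, u.val, u.val + 1} ?_).trans Finset.card_le_three
  intro x hx
  obtain ⟨w, rfl, hw⟩ := mem_closedNbhd_path.1 hx
  simp only [Finset.mem_insert, Finset.mem_singleton]
  omega

lemma ncard_closedNbhd_le {n : ℕ} (S : Set (Fin n)) :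
    (closedNbhd (pathGraph n) S).ncard ≤ 3 * S.ncard := by
  induction S, Set.toFinite S using Set.Finite.induction_on with
  | empty => simp [closedNbhd]
  | @insert a s ha hs ih =>
    rw [Set.ncard_insert_of_notMem ha hs, Set.insert_eq, closedNbhd_union]
    have h1 := Set.ncard_union_le (closedNbhd (pathGraph n) {a}) (closedNbhd (pathGraph n) s)
    have h2 := ncard_closedNbhd_singleton_le a
    omega

lemma isPDomSet_iff_s17 {n : ℕ} (hn : 0 < n) (t : ℕ) (S : Set (Fin n)) :
    IsPDomSet (pathGraph n) ((t : ℝ) / (n : ℝ)) S ↔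
      t ≤ (closedNbhd (pathGraph n) S).ncard := by
  have : (n : ℝ) ≠ 0 := by positivity
  rw [IsPDomSet, Fintype.card_fin, div_mul_cancel₀ _ this, Nat.cast_le]

/-- A set of at most `⌈t/3⌉` vertices covering `t` vertices is a `γ`-set, by the bound
`|N[S]| ≤ 3|S|`; hence all its members are influencing. -/
lemma inInfluence_of_le {n : ℕ} (hn : 0 < n) (t c : ℕ) (S : Set (Fin n)) (v : Fin n) (hv : v ∈ S)
    (hS : t ≤ (closedNbhd (pathGraph n) S).ncard) (hc : S.ncard ≤ c) (ht : 3 * c < t + 3) :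
    InInfluence (pathGraph n) ((t : ℝ) / (n : ℝ)) v := by
  have hdom := (isPDomSet_iff_s17 hn t S).2 hS
  refine ⟨S, ⟨hdom, le_antisymm ?_ (Nat.sInf_le ⟨S, hdom, rfl⟩)⟩, hv⟩
  refine le_csInf ⟨_, S, hdom, rfl⟩ ?_
  rintro _ ⟨T, hT, rfl⟩
  have h1 := (isPDomSet_iff_s17 hn t T).1 hT
  have h2 := ncard_closedNbhd_le T
  omega

/-- The vertices `a, a + 3, …, a + 3k` of the path (0-based, cut off at `n`). -/
def progression (n a k : ℕ) : Set (Fin n) := {x | ∃ i ≤ k, x.val = a + 3 * i}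

lemma ncard_progression_le (n a k : ℕ) : (progression n a k).ncard ≤ k + 1 := by
  refine (ncard_le_of_val _ ((Finset.range (k + 1)).image fun i => a + 3 * i) ?_).trans
    (Finset.card_image_le.trans (Finset.card_range _).le)
  rintro x ⟨i, hi, hx⟩
  simp only [Finset.mem_image, Finset.mem_range]
  exact ⟨i, by omega, hx.symm⟩

lemma mem_closedNbhd_progression {n a k : ℕ} (h : a + 3 * k < n) (x : Fin n)
    (h1 : a ≤ x.val + 1) (h2 : x.val < a + 3 * k + 2) :
    x ∈ closedNbhd (pathGraph n) (progression n a k) := by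
  rw [mem_closedNbhd_path]
  -- the member of the progression nearest to `x`
  have hi : (x.val + 1 - a) / 3 ≤ k := by omega
  exact ⟨⟨a + 3 * ((x.val + 1 - a) / 3), by omega⟩, ⟨_, hi, rfl⟩, by simp only; omega⟩

lemma le_ncard_closedNbhd_progression {n a k : ℕ} (h : a + 3 * k < n) :
    min (a + 3 * k + 2) n - (a - 1) ≤
      (closedNbhd (pathGraph n) (progression n a k)).ncard :=
  le_ncard_of_val _ _ _ (min_le_right _ _) fun x h1 h2 =>
    mem_closedNbhd_progression h x (by omega) (by omega)

/-- If every progression of `k + 1` vertices inside the residue-class window `[lo, hi]` covers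
`t` vertices, and `k + 1 = ⌈t/3⌉`, then every vertex of the window in that class is influencing:
slide the progression so that it passes through the vertex. -/
lemma inInfluence_of_window {n : ℕ} (lo hi k t : ℕ) (v : Fin n) (hlo : lo ≤ v.val)
    (hhi : v.val ≤ hi) (hhn : hi < n) (hvlo : v.val % 3 = lo % 3) (hvhi : v.val % 3 = hi % 3)
    (hk : lo + 3 * k ≤ hi) (ht : 3 * k < t)
    (hcov : ∀ a, lo ≤ a → a + 3 * k ≤ hi → t ≤ min (a + 3 * k + 2) n - (a - 1)) :
    InInfluence (pathGraph n) ((t : ℝ) / (n : ℝ)) v := by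
  obtain ⟨a, i, hi1, hv, ha, hak⟩ :
      ∃ a i, i ≤ k ∧ v.val = a + 3 * i ∧ lo ≤ a ∧ a + 3 * k ≤ hi := by
    by_cases h : (v.val - lo) / 3 ≤ k
    · exact ⟨lo, (v.val - lo) / 3, h, by omega, le_rfl, hk⟩
    · exact ⟨v.val - 3 * k, k, le_rfl, by omega, by omega, by omega⟩
  exact inInfluence_of_le (by omega) t (k + 1) (progression n a k) v ⟨i, hi1, hv⟩
    ((hcov a ha hak).trans (le_ncard_closedNbhd_progression (by omega)))
    (ncard_progression_le n a k) (by omega)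

/-- For the threshold `3k < n`, a `γ`-set covers `3k`
vertices with at most `k` vertices, since `1, 4, …, 3k - 2` does. -/
lemma exists_of_inInfluence {n k : ℕ} (hk : 1 ≤ k) (hkn : 3 * k < n) (v : Fin n)
    (h : InInfluence (pathGraph n) (((3 * k : ℕ) : ℝ) / (n : ℝ)) v) :
    ∃ S : Set (Fin n), v ∈ S ∧ S.ncard ≤ k ∧
      3 * k ≤ (closedNbhd (pathGraph n) S).ncard := by
  obtain ⟨S, ⟨hdom, hcard⟩, hv⟩ := h
  refine ⟨S, hv, ?_, (isPDomSet_iff_s17 (by omega) _ S).1 hdom⟩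
  have h1 := le_ncard_closedNbhd_progression (n := n) (a := 1) (k := k - 1) (by omega)
  have h2 := ncard_progression_le n 1 (k - 1)
  have h3 : pDomNum (pathGraph n) (((3 * k : ℕ) : ℝ) / (n : ℝ)) ≤
      (progression n 1 (k - 1)).ncard :=
    Nat.sInf_le ⟨_, (isPDomSet_iff_s17 (by omega) _ _).2 (by omega), rfl⟩
  omega

/-- An endpoint of the path covers only two vertices, so a set containing one falls short of the
bound `3|S|`. -/
lemma ncard_closedNbhd_lt_of_endpoint {n : ℕ} (S : Set (Fin n)) (v : Fin n) (hv : v ∈ S)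
    (hend : v.val = 0 ∨ v.val + 1 = n) :
    (closedNbhd (pathGraph n) S).ncard < 3 * S.ncard := by
  have h1 : (closedNbhd (pathGraph n) {v}).ncard ≤ 2 := by
    refine (ncard_le_of_val _
      {v.val, if v.val = 0 then 1 else v.val - 1} ?_).trans Finset.card_le_two
    intro x hx
    obtain ⟨w, rfl, hw⟩ := mem_closedNbhd_path.1 hx
    have := x.isLt
    simp only [Finset.mem_insert, Finset.mem_singleton]
    split_ifs <;> omega
  have h2 := ncard_closedNbhd_le (S \ {v})
  have h3 := Set.ncard_sdiff_singleton_add_one hv (Set.toFinite S)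
  have h4 := Set.ncard_union_le (closedNbhd (pathGraph n) {v})
    (closedNbhd (pathGraph n) (S \ {v}))
  rw [← closedNbhd_union, Set.union_sdiff_cancel (Set.singleton_subset_iff.2 hv)] at h4
  omega

/-- In the path on `3m + 1` vertices, `m` vertices that include some `3j` cover fewer than `3m`
vertices: an endpoint covers only two, and for an inner `3j` the two sides of `N[3j]` have lengths
`≡ 2 (mod 3)`, so disjoint triples leave at least two vertices of each uncovered. -/
lemma ncard_closedNbhd_lt_of_mod {m : ℕ} (S : Set (Fin (3 * m + 1))) (v : Fin (3 * m + 1))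
    (hv : v ∈ S) (hmod : v.val % 3 = 0) (hcard : S.ncard ≤ m) :
    (closedNbhd (pathGraph (3 * m + 1)) S).ncard < 3 * m := by
  -- for `v = 3m` the count `3m + 1 - (v + 2)` of vertices beyond `v + 1` would truncate
  by_cases hlast : v.val = 3 * m
  · have := ncard_closedNbhd_lt_of_endpoint S v hv (Or.inr (by omega))
    omega
  set N := closedNbhd (pathGraph (3 * m + 1)) S with hN
  set L : Set (Fin (3 * m + 1)) := {x ∈ S | x.val < v.val} with hL
  set R : Set (Fin (3 * m + 1)) := {x ∈ S | v.val < x.val} with hR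
  have hvlt := v.isLt
  have hsum : L.ncard + R.ncard + 1 = S.ncard := by
    have e : L ∪ R = S \ {v} := by
      ext x
      simp only [hL, hR, Set.mem_union, Set.mem_ofPred_eq, Set.mem_sdiff, Set.mem_singleton_iff,
        Fin.ext_iff]
      constructor
      · rintro (⟨h, h'⟩ | ⟨h, h'⟩) <;> exact ⟨h, by omega⟩
      · rintro ⟨h, h'⟩
        rcases Nat.lt_or_gt_of_ne h' with h' | h'
        · exact Or.inl ⟨h, h'⟩
        · exact Or.inr ⟨h, h'⟩
    have d : Disjoint L R := by
      rw [Set.disjoint_left]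
      rintro x ⟨_, h⟩ ⟨_, h'⟩
      omega
    rw [← Set.ncard_union_eq d (Set.toFinite _) (Set.toFinite _), e]
    exact Set.ncard_sdiff_singleton_add_one hv (Set.toFinite S)
  -- covered vertices up to `v + 1`, and beyond
  set A : Set (Fin (3 * m + 1)) := {x ∈ N | x.val < v.val + 2} with hA
  set B : Set (Fin (3 * m + 1)) := {x ∈ N | v.val + 2 ≤ x.val} with hB
  have hAB : N.ncard ≤ A.ncard + B.ncard := by
    refine (Set.ncard_le_ncard ?_ (Set.toFinite _)).trans (Set.ncard_union_le A B)
    intro x hx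
    rcases Nat.lt_or_ge x.val (v.val + 2) with h | h
    · exact Or.inl ⟨hx, h⟩
    · exact Or.inr ⟨hx, h⟩
  have hA1 : A.ncard ≤ v.val + 2 := by
    refine (ncard_le_of_val A (Finset.range (v.val + 2)) ?_).trans (Finset.card_range _).le
    rintro x ⟨_, hx⟩
    exact Finset.mem_range.2 hx
  have hB1 : B.ncard ≤ 3 * m + 1 - (v.val + 2) := by
    refine (ncard_le_of_val B (Finset.Ico (v.val + 2) (3 * m + 1)) ?_).trans
      (Nat.card_Ico _ _).le
    rintro x ⟨_, hx⟩
    exact Finset.mem_Ico.2 ⟨hx, x.isLt⟩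
  have hA2 : A.ncard ≤ 3 * L.ncard + 3 := by
    have hsub : A ⊆ closedNbhd (pathGraph (3 * m + 1)) L ∪
        closedNbhd (pathGraph (3 * m + 1)) {v} := by
      rintro x ⟨hx, hxv⟩
      obtain ⟨u, hu, hux⟩ := mem_closedNbhd_path.1 hx
      rcases Nat.lt_or_ge u.val v.val with h | h
      · exact Or.inl (mem_closedNbhd_path.2 ⟨u, ⟨hu, h⟩, hux⟩)
      · exact Or.inr (mem_closedNbhd_path.2 ⟨v, rfl, by omega⟩)
    have h1 := Set.ncard_le_ncard hsub (Set.toFinite _)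
    have h2 := Set.ncard_union_le (closedNbhd (pathGraph (3 * m + 1)) L)
      (closedNbhd (pathGraph (3 * m + 1)) {v})
    have h3 := ncard_closedNbhd_le L
    have h4 := ncard_closedNbhd_singleton_le v
    omega
  have hB2 : B.ncard ≤ 3 * R.ncard := by
    refine (Set.ncard_le_ncard ?_ (Set.toFinite _)).trans (ncard_closedNbhd_le R)
    rintro x ⟨hx, hxv⟩
    obtain ⟨u, hu, hux⟩ := mem_closedNbhd_path.1 hx
    exact mem_closedNbhd_path.2 ⟨u, ⟨hu, by omega⟩, hux⟩
  omega

/-- Every vertex of the path on `3m + 1` vertices lies in a dominating set of `m + 1` vertices. -/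
lemma inInfluence_full {m : ℕ} (hm : 1 ≤ m) (v : Fin (3 * m + 1)) :
    InInfluence (pathGraph (3 * m + 1))
      (((3 * m + 1 : ℕ) : ℝ) / ((3 * m + 1 : ℕ) : ℝ)) v := by
  have hv := v.isLt
  by_cases h0 : v.val % 3 = 0
  · exact inInfluence_of_window 0 (3 * m) m _ v (by omega) (by omega) (by omega) (by omega)
      (by omega) (by omega) (by omega) (by intros; omega)
  -- the progression through `v` with `m` members misses just the endpoint `e`
  obtain ⟨r, e, hr, hve, he⟩ : ∃ (r : ℕ) (e : Fin (3 * m + 1)), (r = 1 ∨ r = 2) ∧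
      v.val % 3 = r ∧ (r = 1 ∧ e.val = 3 * m ∨ r = 2 ∧ e.val = 0) := by
    rcases (show v.val % 3 = 1 ∨ v.val % 3 = 2 by omega) with h | h
    · exact ⟨1, ⟨3 * m, by omega⟩, Or.inl rfl, h, Or.inl ⟨rfl, rfl⟩⟩
    · exact ⟨2, ⟨0, by omega⟩, Or.inr rfl, h, Or.inr ⟨rfl, rfl⟩⟩
  refine inInfluence_of_le (by omega) _ (m + 1) ({e} ∪ progression (3 * m + 1) r (m - 1)) v
    (Or.inr ⟨v.val / 3, by omega, by omega⟩) ?_ ?_ (by omega)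
  · refine le_ncard_of_val _ 0 (3 * m + 1) le_rfl fun x _ hx => ?_
    rw [closedNbhd_union]
    by_cases hxe : x = e
    · exact Or.inl (mem_closedNbhd_path.2 ⟨e, rfl, Or.inl (by rw [hxe])⟩)
    · have hxe' : x.val ≠ e.val := fun h => hxe (Fin.ext h)
      exact Or.inr (mem_closedNbhd_progression (by omega) x (by omega) (by omega))
  · have h1 := Set.ncard_union_le {e} (progression (3 * m + 1) r (m - 1))
    have h2 := ncard_progression_le (3 * m + 1) r (m - 1)
    rw [Set.ncard_singleton] at h1
    omega

/-- For `k < m`, thresholds `3k + 1` and `3k + 2` both make every vertex influencing: a progression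
of `k + 1` vertices loses at most one covered vertex at the ends of the path. -/
lemma inInfluence_lt {m k t : ℕ} (hk : k < m) (ht1 : 3 * k < t) (ht2 : t ≤ 3 * k + 2)
    (v : Fin (3 * m + 1)) :
    InInfluence (pathGraph (3 * m + 1)) ((t : ℝ) / ((3 * m + 1 : ℕ) : ℝ)) v := by
  have hv := v.isLt
  rcases (show v.val % 3 = 0 ∨ v.val % 3 = 1 ∨ v.val % 3 = 2 by omega) with h | h | h
  · exact inInfluence_of_window 0 (3 * m) k t v (by omega) (by omega) (by omega) (by omega)
      (by omega) (by omega) (by omega) (by intros; omega)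
  · exact inInfluence_of_window 1 (3 * m - 2) k t v (by omega) (by omega) (by omega) (by omega)
      (by omega) (by omega) (by omega) (by intros; omega)
  · exact inInfluence_of_window 2 (3 * m - 1) k t v (by omega) (by omega) (by omega) (by omega)
      (by omega) (by omega) (by omega) (by intros; omega)

/-- For `1 ≤ k ≤ m` and the threshold `3k`, the vertices in residue classes 1 and 2 are
influencing. -/
lemma inInfluence_three_mul {m k : ℕ} (hk : 1 ≤ k) (hkm : k ≤ m) (v : Fin (3 * m + 1))
    (hv3 : v.val % 3 ≠ 0) :
    InInfluence (pathGraph (3 * m + 1)) (((3 * k : ℕ) : ℝ) / ((3 * m + 1 : ℕ) : ℝ)) v := by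
  have hv := v.isLt
  rcases (show v.val % 3 = 1 ∨ v.val % 3 = 2 by omega) with h | h
  · exact inInfluence_of_window 1 (3 * m - 2) (k - 1) _ v (by omega) (by omega) (by omega)
      (by omega) (by omega) (by omega) (by omega) (by intros; omega)
  · exact inInfluence_of_window 2 (3 * m - 1) (k - 1) _ v (by omega) (by omega) (by omega)
      (by omega) (by omega) (by omega) (by omega) (by intros; omega)

/-- For `P_n` with `n ≡ 1 (mod 3)`.  Vertices of `pathGraph n` are `Fin n`,
with `v_i` (1-based) corresponding to the index `i - 1` (0-based); in particular
`v_i` with `i ≡ 1 (mod 3)` corresponds to `v.val ≡ 0 (mod 3)`. -/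
theorem stmt17 (n : ℕ) (hn : 4 ≤ n) (hmod : n % 3 = 1) :
    (∀ k : ℕ, 3 * k + 1 ≤ n →
      ((∀ v : Fin n, InInfluence (pathGraph n) ((3 * k + 1 : ℝ) / (n : ℝ)) v) ∧
        (3 * k + 2 ≤ n →
          ∀ v : Fin n, InInfluence (pathGraph n) ((3 * k + 2 : ℝ) / (n : ℝ)) v))) ∧
    (∀ k : ℕ, 1 ≤ k → 3 * k ≤ n - 4 →
      ∀ v : Fin n, InInfluence (pathGraph n) ((3 * k : ℝ) / (n : ℝ)) v ↔
        1 ≤ v.val ∧ v.val ≤ n - 2) ∧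
    (∀ v : Fin n, InInfluence (pathGraph n) (((n : ℝ) - 1) / (n : ℝ)) v ↔
      v.val % 3 ≠ 0) := by
  obtain ⟨m, rfl⟩ : ∃ m, n = 3 * m + 1 := ⟨n / 3, by omega⟩
  refine ⟨fun k hk => ⟨fun v => ?_, fun hk2 v => ?_⟩, fun k hk hkn v => ?_, fun v => ?_⟩
  · have e : (3 * k + 1 : ℝ) = ((3 * k + 1 : ℕ) : ℝ) := by push_cast; ring
    rw [e]
    rcases (show k ≤ m by omega).lt_or_eq with h | rfl
    · exact inInfluence_lt h (by omega) (by omega) v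
    · exact inInfluence_full (by omega) v
  · have e : (3 * k + 2 : ℝ) = ((3 * k + 2 : ℕ) : ℝ) := by push_cast; ring
    rw [e]
    exact inInfluence_lt (k := k) (by omega) (by omega) (by omega) v
  · have e : (3 * k : ℝ) = ((3 * k : ℕ) : ℝ) := by push_cast; ring
    rw [e]
    have hv := v.isLt
    constructor
    · intro h
      obtain ⟨S, hvS, hcard, hcov⟩ := exists_of_inInfluence hk (by omega) v h
      by_contra hend
      have := ncard_closedNbhd_lt_of_endpoint S v hvS (by omega)
      omega
    · rintro ⟨h1, h2⟩
      by_cases h0 : v.val % 3 = 0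
      · exact inInfluence_of_window 3 (3 * m - 3) (k - 1) _ v (by omega) (by omega) (by omega)
          (by omega) (by omega) (by omega) (by omega) (by intros; omega)
      · exact inInfluence_three_mul hk (by omega) v h0
  · have e : ((3 * m + 1 : ℕ) : ℝ) - 1 = ((3 * m : ℕ) : ℝ) := by push_cast; ring
    rw [e]
    constructor
    · intro h h0
      obtain ⟨S, hvS, hcard, hcov⟩ := exists_of_inInfluence (by omega) (by omega) v h
      have := ncard_closedNbhd_lt_of_mod S v hvS h0 hcard
      omega
    · exact inInfluence_three_mul (by omega) le_rfl v
end
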